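/- The set of codes of pairs (R, t), where R is a finite term rewriting system over a finite signature and t is a term over that signature such that R is confluent on t, is Π⁰₂-complete. -/

import Mathlib

/-!
Membership in `Π⁰₂`. A predicate defined inductively by semidecidable inference rules is `Σ⁰₁`: it
holds iff there is a finite list of proof lines, each justified by earlier ones (`SigmaPred.der`).
Since coding is a bijection between terms and natural numbers, this applies to substitution,
rewriting, reduction and well-formedness. Confluence on `t` says that for all `t₁`, `t₂`, if both
are reducts of `t` then they have a common reduct, an implication between two `Σ⁰₁` predicates under
a universal quantifier, which is `Π⁰₂` (`pi02_of_sigma`, `pi02_crSet`).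

Hardness. One fixed system `Univ.rules` simulates the small-step semantics of the codes
`Turing.ToPartrec.Code`, which compute all partial recursive functions; every halting run is
rewritten to the constant `Univ.tT`, and runs are deterministic. A further symbol is a generator
`G c n x`, which may rewrite to `G c n (x + 1)`, to `tT`, or to the start of the run of the code `c`
on the list `[n, x]`. If all these runs halt then every reduct of `G c n 0` reduces to `tT`. If the
run for some `x` does not halt, then it has no reduct in common with the normal form `tT`, although
both are reducts of `G c n 0`. Hence the system is confluent on `G c n 0` iff `c` halts on `[n, x]`
for all `x` (`Univ.cron_gen`). Given a `Π⁰₂` set `∀ x, ∃ y, p n x y`, take for `c` a code that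
searches for `y` (`Univ.exists_search`); the reduction maps `n` to the code of the instance
consisting of the system and the term `G c n 0`.
-/

/-- First-order terms over the fixed countably infinite set of variables
(named by naturals): a term is a variable or a function symbol (named by a
natural number) applied to a list of argument terms. -/
inductive Term : Type
  | var : ℕ → Term
  | app : ℕ → List Term → Term

namespace Term

/-- Homomorphic application of a substitution (a map from variables to terms). -/
def subst (σ : ℕ → Term) : Term → Term
  | var n => σ n
  | app f ts => app f (ts.attach.map (fun x => subst σ x.1))
decreasing_by
  have := List.sizeOf_lt_of_mem x.2
  simp only [Term.app.sizeOf_spec]; omega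

/-- An injective encoding of terms into the natural numbers. -/
def encode : Term → ℕ
  | var n => Nat.pair 0 n
  | app f ts => Nat.pair (f + 1) (Encodable.encode (ts.attach.map (fun x => encode x.1)))
decreasing_by
  have := List.sizeOf_lt_of_mem x.2
  simp only [Term.app.sizeOf_spec]; omega

end Term

/-- `IsVarOf n t` holds iff the variable `n` occurs in the term `t`. -/
inductive IsVarOf (n : ℕ) : Term → Prop
  | var : IsVarOf n (.var n)
  | app {f : ℕ} {ts : List Term} {t : Term} : t ∈ ts → IsVarOf n t → IsVarOf n (.app f ts)

/-- A term is ground if no variable occurs in it. -/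
def Ground (t : Term) : Prop := ∀ n : ℕ, ¬ IsVarOf n t

/-- A (finite) signature is presented by a finite list of pairs
(function symbol, arity); `WFSig` states that each symbol has a unique arity. -/
def WFSig (sig : List (ℕ × ℕ)) : Prop :=
  ∀ p ∈ sig, ∀ q ∈ sig, p.1 = q.1 → p.2 = q.2

/-- `WFTerm sig t`: `t` is a term over the signature `sig`, i.e. every function
symbol occurring in `t` belongs to `sig` and is applied to the correct number
of arguments. -/
inductive WFTerm (sig : List (ℕ × ℕ)) : Term → Prop
  | var (n : ℕ) : WFTerm sig (.var n)
  | app {f : ℕ} {ts : List Term} : (f, ts.length) ∈ sig →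
      (∀ t ∈ ts, WFTerm sig t) → WFTerm sig (.app f ts)

/-- `WFTRS sig R`: the finite list of rules `R` is a term rewriting system over
the signature `sig`: `sig` assigns unique arities, both sides of every rule are
terms over `sig`, no left-hand side is a variable, and every variable occurring
in a right-hand side occurs in the corresponding left-hand side. -/
def WFTRS (sig : List (ℕ × ℕ)) (R : List (Term × Term)) : Prop :=
  WFSig sig ∧ ∀ p ∈ R, WFTerm sig p.1 ∧ WFTerm sig p.2 ∧
    (∀ n : ℕ, p.1 ≠ .var n) ∧ (∀ n : ℕ, IsVarOf n p.2 → IsVarOf n p.1)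

/-- The one-step rewrite relation `→_R` of a TRS `R`: application of a rule
under a substitution, closed under arbitrary one-hole contexts (i.e. embedded
at any argument position at any depth). -/
inductive Rewrite (R : List (Term × Term)) : Term → Term → Prop
  | rule (l r : Term) (σ : ℕ → Term) (h : (l, r) ∈ R) :
      Rewrite R (l.subst σ) (r.subst σ)
  | congr (f : ℕ) (ts₁ ts₂ : List Term) (t t' : Term) (h : Rewrite R t t') :
      Rewrite R (.app f (ts₁ ++ t :: ts₂)) (.app f (ts₁ ++ t' :: ts₂))

/-- Many-step rewriting `→*_R` (reflexive-transitive closure of `→_R`). -/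
def Reduces (R : List (Term × Term)) : Term → Term → Prop :=
  Relation.ReflTransGen (Rewrite R)

/-- `t` is a normal form of `R` (admits no `→_R`-step). -/
def NormalForm (R : List (Term × Term)) (t : Term) : Prop := ∀ u : Term, ¬ Rewrite R t u

/-- `R` is strongly normalizing (terminating) on `t`:
no infinite rewrite sequence starts at `t`. -/
def SNon (R : List (Term × Term)) (t : Term) : Prop :=
  ¬ ∃ f : ℕ → Term, f 0 = t ∧ ∀ n : ℕ, Rewrite R (f n) (f (n + 1))

/-- `R` is weakly normalizing on `t`: some reduction from `t` ends in a normal form. -/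
def WNon (R : List (Term × Term)) (t : Term) : Prop :=
  ∃ s : Term, Reduces R t s ∧ NormalForm R s

/-- `R` is confluent (Church-Rosser) on `t`. -/
def CRon (R : List (Term × Term)) (t : Term) : Prop :=
  ∀ t₁ t₂ : Term, Reduces R t t₁ → Reduces R t t₂ →
    ∃ d : Term, Reduces R t₁ d ∧ Reduces R t₂ d

/-- `R` is weakly confluent (weakly Church-Rosser) on `t`. -/
def WCRon (R : List (Term × Term)) (t : Term) : Prop :=
  ∀ t₁ t₂ : Term, Rewrite R t t₁ → Rewrite R t t₂ →
    ∃ d : Term, Reduces R t₁ d ∧ Reduces R t₂ d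

/-- A root step `s →_{R,ε} t`: `s = ℓσ` and `t = rσ` for some rule `ℓ → r` of `R`. -/
def RootStep (R : List (Term × Term)) (s t : Term) : Prop :=
  ∃ (l r : Term) (σ : ℕ → Term), (l, r) ∈ R ∧ s = l.subst σ ∧ t = r.subst σ

/-- Code of a rewrite rule. -/
def encodeRule (p : Term × Term) : ℕ := Nat.pair p.1.encode p.2.encode

/-- Code of a finite TRS. -/
def encodeTRS (R : List (Term × Term)) : ℕ := Encodable.encode (R.map encodeRule)

/-- Code of a finite signature. -/
def encodeSig (sig : List (ℕ × ℕ)) : ℕ := Encodable.encode sig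

/-- A set `A ⊆ ℕ` is Σ⁰₁ (recursively enumerable) if it is the domain of a
partial computable function. -/
def Sigma01 (A : Set ℕ) : Prop :=
  ∃ f : ℕ →. ℕ, Nat.Partrec f ∧ ∀ n : ℕ, n ∈ A ↔ (f n).Dom

/-- `B` is many-one reducible to `A`: there is a total computable `g` with
`n ∈ B ↔ g n ∈ A` for all `n`. -/
def ManyOneRed (B A : Set ℕ) : Prop :=
  ∃ g : ℕ → ℕ, Computable g ∧ ∀ n : ℕ, n ∈ B ↔ g n ∈ A

/-- `A` is Σ⁰₁-complete. -/
def Sigma01Complete (A : Set ℕ) : Prop :=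
  Sigma01 A ∧ ∀ B : Set ℕ, Sigma01 B → ManyOneRed B A

/-- A set `A ⊆ ℕ` is Π⁰₂ if there is a decidable (computable) predicate
`P ⊆ ℕ³` with `n ∈ A ↔ ∀ x ∃ y, P n x y`. -/
def Pi02 (A : Set ℕ) : Prop :=
  ∃ p : ℕ → ℕ → ℕ → Bool,
    Computable (fun x : ℕ × ℕ × ℕ => p x.1 x.2.1 x.2.2) ∧
    ∀ n : ℕ, n ∈ A ↔ ∀ x : ℕ, ∃ y : ℕ, p n x y = true

/-- `A` is Π⁰₂-complete. -/
def Pi02Complete (A : Set ℕ) : Prop :=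
  Pi02 A ∧ ∀ B : Set ℕ, Pi02 B → ManyOneRed B A

/-- A set `A ⊆ ℕ` is Π¹₁ if there is a decidable (computable) predicate
`P ⊆ ℕ²` such that `n ∈ A` iff for every function `α : ℕ → ℕ` there exists
`k` with `P n ⟨α 0, …, α (k-1)⟩`, where `⟨·⟩` is the (computable) coding of
finite sequences of naturals. -/
def Pi11 (A : Set ℕ) : Prop :=
  ∃ p : ℕ → ℕ → Bool,
    Computable (fun x : ℕ × ℕ => p x.1 x.2) ∧
    ∀ n : ℕ, n ∈ A ↔ ∀ α : ℕ → ℕ, ∃ k : ℕ,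
      p n (Encodable.encode (List.ofFn (fun i : Fin k => α i))) = true

/-- `A` is Π¹₁-complete. -/
def Pi11Complete (A : Set ℕ) : Prop :=
  Pi11 A ∧ ∀ B : Set ℕ, Pi11 B → ManyOneRed B A

/-! ### Primitive recursive functions and predicates -/

attribute [fun_prop] Primrec
attribute [fun_prop] Primrec.id Primrec.const Primrec.comp

namespace Primrec

variable {α β γ : Type} [Primcodable α] [Primcodable β] [Primcodable γ]

@[fun_prop] theorem fst_app {f : α → β × γ} (h : Primrec f) : Primrec fun a => (f a).1 :=
  Primrec.fst.comp h

@[fun_prop] theorem snd_app {f : α → β × γ} (h : Primrec f) : Primrec fun a => (f a).2 :=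
  Primrec.snd.comp h

@[fun_prop] theorem mk_app {f : α → β} {g : α → γ} (hf : Primrec f) (hg : Primrec g) :
    Primrec fun a => (f a, g a) :=
  Primrec.pair hf hg

@[fun_prop] theorem append_app {f g : α → List β} (hf : Primrec f) (hg : Primrec g) :
    Primrec fun a => f a ++ g a :=
  Primrec.list_append.comp hf hg

@[fun_prop] theorem cons_app {f : α → β} {g : α → List β} (hf : Primrec f) (hg : Primrec g) :
    Primrec fun a => f a :: g a :=
  Primrec.list_cons.comp hf hg

@[fun_prop] theorem map_app {f : α → List β} {g : β → γ} (hf : Primrec f) (hg : Primrec g) :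
    Primrec fun a => (f a).map g :=
  Primrec.list_map hf (hg.comp Primrec.snd)

@[fun_prop] theorem length_app {f : α → List β} (hf : Primrec f) :
    Primrec fun a => (f a).length :=
  Primrec.list_length.comp hf

@[fun_prop] theorem flatten_app {f : α → List (List β)} (hf : Primrec f) :
    Primrec fun a => (f a).flatten :=
  Primrec.list_flatten.comp hf

@[fun_prop] theorem getD_app {f : α → List β} {g : α → ℕ} {d : β} (hf : Primrec f)
    (hg : Primrec g) : Primrec fun a => (f a).getD (g a) d :=
  (Primrec.list_getD d).comp hf hg

@[fun_prop] theorem some_app {f : α → β} (hf : Primrec f) : Primrec fun a => some (f a) :=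
  Primrec.option_some.comp hf

@[fun_prop] theorem decode_app {f : α → ℕ} (hf : Primrec f) :
    Primrec fun a => (Encodable.decode (f a) : Option β) :=
  Primrec.decode.comp hf

@[fun_prop] theorem encode_app {f : α → β} (hf : Primrec f) :
    Primrec fun a => Encodable.encode (f a) :=
  Primrec.encode.comp hf

/-- An optional value, as a list of length at most one. -/
@[fun_prop] theorem toList_app {f : α → Option β} (hf : Primrec f) :
    Primrec fun a => (f a).toList :=
  (Primrec.option_casesOn hf (Primrec.const [])
    (g := fun _ b => [b]) (Primrec.list_cons.comp Primrec.snd (Primrec.const []))).of_eq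
    fun a => by cases f a <;> rfl

end Primrec

namespace PrimrecPred

variable {α β : Type} [Primcodable α] [Primcodable β]

theorem eq_app {f g : α → β} (hf : Primrec f) (hg : Primrec g) :
    PrimrecPred fun a => f a = g a :=
  Primrec.eq.comp hf hg

theorem ex_mem {p : α → β → Prop} {l : α → List β}
    (hp : PrimrecPred fun x : α × β => p x.1 x.2) (hl : Primrec l) :
    PrimrecPred fun a => ∃ b ∈ l a, p a b :=
  (PrimrecRel.exists_mem_list (R := fun b a => p a b)
    (hp.comp (Primrec.pair Primrec.snd Primrec.fst))).comp hl Primrec.id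

theorem all_mem {p : α → β → Prop} {l : α → List β}
    (hp : PrimrecPred fun x : α × β => p x.1 x.2) (hl : Primrec l) :
    PrimrecPred fun a => ∀ b ∈ l a, p a b :=
  (PrimrecRel.forall_mem_list (R := fun b a => p a b)
    (hp.comp (Primrec.pair Primrec.snd Primrec.fst))).comp hl Primrec.id

theorem mem_app {f : α → β} {l : α → List β} (hf : Primrec f) (hl : Primrec l) :
    PrimrecPred fun a => f a ∈ l a :=
  (ex_mem (p := fun a b => b = f a) (eq_app (by fun_prop) (hf.comp Primrec.fst)) hl).of_eq
    fun a => by simp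

end PrimrecPred

/-! ### Semidecidable predicates -/

/-- `SigmaPred p`: the predicate `p` is `Σ⁰₁`, i.e. the projection of a primitive recursive
relation. -/
def SigmaPred {α : Type} [Primcodable α] (p : α → Prop) : Prop :=
  ∃ q : α × ℕ → Prop, PrimrecPred q ∧ ∀ a, p a ↔ ∃ y, q (a, y)

namespace SigmaPred

variable {α β : Type} [Primcodable α] [Primcodable β] {p q : α → Prop}

theorem of_iff (h : SigmaPred p) (e : ∀ a, q a ↔ p a) : SigmaPred q := by
  obtain ⟨r, hr, h⟩ := h
  exact ⟨r, hr, fun a => (e a).trans (h a)⟩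

theorem prim (h : PrimrecPred p) : SigmaPred p :=
  ⟨fun x => p x.1, h.comp Primrec.fst, fun a => by simp⟩

theorem comp {p : β → Prop} (h : SigmaPred p) {f : α → β} (hf : Primrec f) :
    SigmaPred fun a => p (f a) := by
  obtain ⟨r, hr, h⟩ := h
  exact ⟨fun x => r (f x.1, x.2), hr.comp (by fun_prop), fun a => h (f a)⟩

theorem ex {p : α → β → Prop} (h : SigmaPred fun x : α × β => p x.1 x.2) :
    SigmaPred fun a => ∃ b, p a b := by
  obtain ⟨r, hr, h⟩ := h
  refine ⟨fun x => ∃ w ∈ (Encodable.decode x.2 : Option (β × ℕ)).toList, r ((x.1, w.1), w.2),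
    PrimrecPred.ex_mem (p := fun (x : α × ℕ) (w : β × ℕ) => r ((x.1, w.1), w.2))
      (hr.comp (by fun_prop)) (by fun_prop), fun a => ?_⟩
  constructor
  · rintro ⟨b, hb⟩
    obtain ⟨y, hy⟩ := (h (a, b)).1 hb
    exact ⟨Encodable.encode (b, y), (b, y), by simp, hy⟩
  · rintro ⟨_, ⟨b, y⟩, -, hy⟩
    exact ⟨b, (h (a, b)).2 ⟨y, hy⟩⟩

theorem and (hp : SigmaPred p) (hq : SigmaPred q) : SigmaPred fun a => p a ∧ q a := by
  obtain ⟨r, hr, h⟩ := hp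
  obtain ⟨s, hs, h'⟩ := hq
  have key : SigmaPred fun a => ∃ y : ℕ × ℕ, r (a, y.1) ∧ s (a, y.2) :=
    ex (p := fun a (y : ℕ × ℕ) => r (a, y.1) ∧ s (a, y.2))
      (prim ((hr.comp (by fun_prop)).and (hs.comp (by fun_prop))))
  refine key.of_iff fun a => ?_
  rw [h, h']
  exact ⟨fun ⟨⟨y, hy⟩, z, hz⟩ => ⟨(y, z), hy, hz⟩, fun ⟨y, hy, hz⟩ => ⟨⟨_, hy⟩, _, hz⟩⟩

theorem or (hp : SigmaPred p) (hq : SigmaPred q) : SigmaPred fun a => p a ∨ q a := by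
  obtain ⟨r, hr, h⟩ := hp
  obtain ⟨s, hs, h'⟩ := hq
  refine ⟨fun x => r x ∨ s x, hr.or hs, fun a => ?_⟩
  simp only [h, h', exists_or]

/-- Bounded universal quantification: the witness is the list of witnesses, one for each member. -/
theorem all {p : α → β → Prop} {l : α → List β} (h : SigmaPred fun x : α × β => p x.1 x.2)
    (hl : Primrec l) : SigmaPred fun a => ∀ b ∈ l a, p a b := by
  obtain ⟨r, hr, h⟩ := h
  have key : SigmaPred fun a => ∃ W : List (β × ℕ),
      W.map (fun w => w.1) = l a ∧ ∀ w ∈ W, r ((a, w.1), w.2) := by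
    refine ex (prim ((PrimrecPred.eq_app (by fun_prop) (by fun_prop)).and ?_))
    exact PrimrecPred.all_mem (p := fun (x : α × List (β × ℕ)) (w : β × ℕ) => r ((x.1, w.1), w.2))
      (hr.comp (by fun_prop)) (by fun_prop)
  refine key.of_iff fun a => ?_
  constructor
  · intro H
    have H' : ∀ b ∈ l a, ∃ y, r ((a, b), y) := fun b hb => (h (a, b)).1 (H b hb)
    generalize l a = L at H'
    clear H
    induction L with
    | nil => exact ⟨[], by simp⟩
    | cons b L ih =>
      obtain ⟨W, hW, hr'⟩ := ih fun c hc => H' c (by simp [hc])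
      obtain ⟨y, hy⟩ := H' b (by simp)
      exact ⟨(b, y) :: W, by simp [hW], by simpa using ⟨hy, fun c z hz => hr' (c, z) hz⟩⟩
  · rintro ⟨W, hW, H⟩ b hb
    rw [← hW, List.mem_map] at hb
    obtain ⟨w, hw, rfl⟩ := hb
    exact (h (a, w.1)).2 ⟨w.2, H w hw⟩

end SigmaPred

/-- The predicate defined inductively by the inference rules `ok`, where `ok a ps` says that `a`
may be inferred from the premises `ps`. -/
inductive Der {α : Type} (ok : α → List α → Prop) : α → Prop
  | mk (a : α) (ps : List α) : ok a ps → (∀ p ∈ ps, Der ok p) → Der ok a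

/-- A finite list `L` of proof lines. A line consists of a rank, a conclusion, a list of premises,
and a witness that the inference is allowed; every premise must be the conclusion of a line of
smaller rank. -/
def GoodProof {α : Type} (q : (α × List α) × ℕ → Prop) (L : List (ℕ × α × List α × ℕ)) : Prop :=
  ∀ e ∈ L, q ((e.2.1, e.2.2.1), e.2.2.2) ∧ ∀ p ∈ e.2.2.1, ∃ e' ∈ L, e'.2.1 = p ∧
    ∃ k ∈ List.range e.1, k = e'.1

namespace GoodProof

variable {α : Type} {q : (α × List α) × ℕ → Prop}

theorem append {L M : List (ℕ × α × List α × ℕ)} (hL : GoodProof q L) (hM : GoodProof q M) :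
    GoodProof q (L ++ M) := by
  intro e he
  rcases List.mem_append.1 he with he | he
  · refine ⟨(hL e he).1, fun p hp => ?_⟩
    obtain ⟨e', h, h'⟩ := (hL e he).2 p hp
    exact ⟨e', by simp [h], h'⟩
  · refine ⟨(hM e he).1, fun p hp => ?_⟩
    obtain ⟨e', h, h'⟩ := (hM e he).2 p hp
    exact ⟨e', by simp [h], h'⟩

theorem der {ok : α → List α → Prop} (h : ∀ x : α × List α, ok x.1 x.2 ↔ ∃ y, q (x, y))
    {L : List (ℕ × α × List α × ℕ)} (hL : GoodProof q L) :
    ∀ n, ∀ e ∈ L, e.1 = n → Der ok e.2.1 := by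
  intro n
  induction n using Nat.strong_induction_on with
  | _ n ih =>
    intro e he hn
    refine Der.mk _ e.2.2.1 ((h (_, _)).2 ⟨_, (hL e he).1⟩) fun p hp => ?_
    obtain ⟨e', he', rfl, k, hk, rfl⟩ := (hL e he).2 p hp
    exact ih e'.1 (by simpa [hn] using hk) e' he' rfl

theorem exists_of_der {ok : α → List α → Prop}
    (h : ∀ x : α × List α, ok x.1 x.2 ↔ ∃ y, q (x, y)) {a : α} (ha : Der ok a) :
    ∃ L, GoodProof q L ∧ ∃ e ∈ L, e.2.1 = a := by
  induction ha with
  | mk a ps hok _ ih =>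
    have main : ∀ qs : List α, (∀ p ∈ qs, p ∈ ps) →
        ∃ L, GoodProof q L ∧ ∀ p ∈ qs, ∃ e ∈ L, e.2.1 = p := by
      intro qs
      induction qs with
      | nil => exact fun _ => ⟨[], by simp [GoodProof]⟩
      | cons p qs ih' =>
        intro hq
        obtain ⟨L, hL, hp⟩ := ih p (hq p (by simp))
        obtain ⟨M, hM, hqs⟩ := ih' fun r hr => hq r (by simp [hr])
        refine ⟨L ++ M, hL.append hM, fun r hr => ?_⟩
        rcases List.mem_cons.1 hr with rfl | hr
        · obtain ⟨e, he, h⟩ := hp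
          exact ⟨e, by simp [he], h⟩
        · obtain ⟨e, he, h⟩ := hqs r hr
          exact ⟨e, by simp [he], h⟩
    obtain ⟨L, hL, hp⟩ := main ps fun _ h => h
    obtain ⟨y, hy⟩ := (h (a, ps)).1 hok
    -- the new line gets a rank above all the ranks already in use
    set N := (L.map (fun e => e.1)).sum + 1 with hN
    have hlt : ∀ e ∈ L, e.1 < N := fun e he =>
      Nat.lt_succ_of_le (List.le_sum_of_mem (List.mem_map.2 ⟨e, he, rfl⟩))
    refine ⟨(N, a, ps, y) :: L, fun e he => ?_, _, List.mem_cons_self, rfl⟩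
    rcases List.mem_cons.1 he with rfl | he
    · refine ⟨hy, fun p hpp => ?_⟩
      obtain ⟨e', he', rfl⟩ := hp p hpp
      exact ⟨e', by simp [he'], rfl, e'.1, by simpa using hlt e' he', rfl⟩
    · refine ⟨(hL e he).1, fun p hpp => ?_⟩
      obtain ⟨e', h1, h2⟩ := (hL e he).2 p hpp
      exact ⟨e', by simp [h1], h2⟩

end GoodProof

/-- Inductively defined predicates with semidecidable inference rules are semidecidable: search
for a proof. -/
theorem SigmaPred.der {α : Type} [Primcodable α] {ok : α → List α → Prop}
    (hok : SigmaPred fun x : α × List α => ok x.1 x.2) : SigmaPred (Der ok) := by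
  obtain ⟨q, hq, h⟩ := hok
  have key : SigmaPred fun a : α => ∃ L : List (ℕ × α × List α × ℕ),
      GoodProof q L ∧ ∃ e ∈ L, e.2.1 = a := by
    refine SigmaPred.ex (SigmaPred.prim (PrimrecPred.and ?_ ?_))
    · have hgood : PrimrecPred fun L : List (ℕ × α × List α × ℕ) => GoodProof q L := by
        unfold GoodProof
        refine PrimrecPred.all_mem
          (p := fun (L : List (ℕ × α × List α × ℕ)) (e : ℕ × α × List α × ℕ) =>
            q ((e.2.1, e.2.2.1), e.2.2.2) ∧ ∀ p ∈ e.2.2.1, ∃ e' ∈ L, e'.2.1 = p ∧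
              ∃ k ∈ List.range e.1, k = e'.1) ?_ (by fun_prop)
        refine (hq.comp (by fun_prop)).and (PrimrecPred.all_mem
          (p := fun (x : List (ℕ × α × List α × ℕ) × (ℕ × α × List α × ℕ)) p =>
            ∃ e' ∈ x.1, e'.2.1 = p ∧ ∃ k ∈ List.range x.2.1, k = e'.1) ?_ (by fun_prop))
        refine PrimrecPred.ex_mem
          (p := fun (y : (List (ℕ × α × List α × ℕ) × (ℕ × α × List α × ℕ)) × α)
              (e' : ℕ × α × List α × ℕ) =>
            e'.2.1 = y.2 ∧ ∃ k ∈ List.range y.1.2.1, k = e'.1) ?_ (by fun_prop)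
        refine (PrimrecPred.eq_app (by fun_prop) (by fun_prop)).and (PrimrecPred.ex_mem
          (p := fun (z : ((List (ℕ × α × List α × ℕ) × (ℕ × α × List α × ℕ)) × α) ×
            (ℕ × α × List α × ℕ)) k => k = z.2.1) (PrimrecPred.eq_app (by fun_prop) (by fun_prop))
            (Primrec.list_range.comp (by fun_prop)))
      exact hgood.comp (by fun_prop)
    · exact PrimrecPred.ex_mem
        (p := fun (x : α × List (ℕ × α × List α × ℕ)) (e : ℕ × α × List α × ℕ) => e.2.1 = x.1)
        (PrimrecPred.eq_app (by fun_prop) (by fun_prop)) (by fun_prop)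
  refine key.of_iff fun a => ⟨GoodProof.exists_of_der h, ?_⟩
  rintro ⟨L, hL, e, he, rfl⟩
  exact hL.der h e.1 e he rfl

/-! ### Terms as a recursively presented datatype -/

namespace Term

theorem ind {P : Term → Prop} (hv : ∀ n, P (var n))
    (ha : ∀ f ts, (∀ t ∈ ts, P t) → P (app f ts)) : ∀ t, P t
  | var n => hv n
  | app f ts => ha f ts fun t _ => ind hv ha t

@[simp] theorem subst_var (σ : ℕ → Term) (n : ℕ) : subst σ (var n) = σ n := by
  simp [subst]

@[simp] theorem subst_app (σ : ℕ → Term) (f : ℕ) (ts : List Term) :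
    subst σ (app f ts) = app f (ts.map (subst σ)) := by
  simp [subst]

theorem encode_var (n : ℕ) : encode (var n) = Nat.pair 0 n := by
  simp [encode]

theorem encode_app (f : ℕ) (ts : List Term) :
    encode (app f ts) = Nat.pair (f + 1) (Encodable.encode (ts.map encode)) := by
  simp [encode]

theorem encode_injective : Function.Injective encode := by
  intro t
  induction t using ind with
  | hv n =>
    intro s h
    cases s with
    | var m => simpa [encode_var] using h
    | app g ss => simp [encode_var, encode_app] at h
  | ha f ts ih =>
    intro s h
    cases s with
    | var m => simp [encode_var, encode_app] at h
    | app g ss =>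
      simp only [encode_app, Nat.pair_eq_pair, Nat.add_right_cancel_iff] at h
      obtain ⟨rfl, h⟩ := h
      have h := Encodable.encode_injective h
      congr 1
      clear * - ih h
      induction ts generalizing ss with
      | nil => cases ss <;> simp_all
      | cons t ts ih' =>
        cases ss with
        | nil => simp at h
        | cons s ss =>
          simp only [List.map_cons, List.cons.injEq] at h
          rw [ih t (by simp) h.1, ih' (fun t ht => ih t (by simp [ht])) ss h.2]

theorem mem_lt_encode {l : List ℕ} {n : ℕ} (h : n ∈ l) : n < Encodable.encode l := by
  induction l with
  | nil => simp at h
  | cons a l ih =>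
    rw [Encodable.encode_list_cons]
    rcases List.mem_cons.1 h with rfl | h
    · exact Nat.lt_succ_of_le (Nat.left_le_pair _ _)
    · exact (ih h).trans_le ((Nat.right_le_pair _ _).trans (Nat.le_succ _))

/-- Every natural number codes a term, since every natural number codes a list of numbers. -/
theorem encode_surjective : Function.Surjective encode := by
  intro m
  induction m using Nat.strong_induction_on with
  | _ m ih =>
    obtain ⟨a, b, rfl⟩ : ∃ a b, Nat.pair a b = m := ⟨_, _, Nat.pair_unpair m⟩
    cases a with
    | zero => exact ⟨var b, encode_var b⟩
    | succ f =>
      set l := Denumerable.ofNat (List ℕ) b with hl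
      have hb : Encodable.encode l = b := by simp [hl]
      have hex : ∀ l' : List ℕ, (∀ n ∈ l', n ∈ l) → ∃ ts : List Term, ts.map encode = l' := by
        intro l'
        induction l' with
        | nil => exact fun _ => ⟨[], rfl⟩
        | cons n l' ih' =>
          intro hn
          obtain ⟨ts, hts⟩ := ih' fun k hk => hn k (by simp [hk])
          obtain ⟨t, ht⟩ := ih n (((mem_lt_encode (hn n (by simp))).trans_eq hb).trans_le
            (Nat.right_le_pair _ _))
          exact ⟨t :: ts, by simp [ht, hts]⟩
      obtain ⟨ts, hts⟩ := hex l fun _ h => h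
      exact ⟨app f ts, by rw [encode_app, hts, hb]⟩

/-- The coding of terms, as a bijection onto the natural numbers. -/
noncomputable def codeEquiv : Term ≃ ℕ :=
  Equiv.ofBijective encode ⟨encode_injective, encode_surjective⟩

noncomputable instance : Primcodable Term := Primcodable.ofEquiv ℕ codeEquiv

theorem encode_eq (t : Term) : Encodable.encode t = t.encode := rfl

theorem encode_list_eq (ts : List Term) :
    Encodable.encode ts = Encodable.encode (ts.map encode) := by
  induction ts with
  | nil => rfl
  | cons t ts ih =>
    rw [List.map_cons, Encodable.encode_list_cons, Encodable.encode_list_cons, ih]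
    rfl

@[fun_prop] theorem primrec_var {α : Type} [Primcodable α] {f : α → ℕ} (hf : Primrec f) :
    Primrec fun a => var (f a) := by
  rw [← Primrec.encode_iff]
  simp only [encode_eq, encode_var]
  exact Primrec₂.natPair.comp (by fun_prop) hf

@[fun_prop] theorem primrec_app {α : Type} [Primcodable α] {f : α → ℕ} {g : α → List Term}
    (hf : Primrec f) (hg : Primrec g) : Primrec fun a => app (f a) (g a) := by
  rw [← Primrec.encode_iff]
  simp only [encode_eq, encode_app, ← encode_list_eq]
  exact Primrec₂.natPair.comp (Primrec.succ.comp hf) (by fun_prop)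

/-- The action of a substitution on a term depends on finitely many values only. -/
theorem subst_bound (t : Term) :
    ∃ N, ∀ σ τ : ℕ → Term, (∀ n < N, σ n = τ n) → t.subst σ = t.subst τ := by
  induction t using ind with
  | hv n => exact ⟨n + 1, fun σ τ h => by simpa using h n (by simp)⟩
  | ha f ts ih =>
    choose! N hN using ih
    refine ⟨(ts.map N).sum, fun σ τ h => ?_⟩
    rw [subst_app, subst_app]
    congr 1
    refine List.map_congr_left fun t ht => hN t ht σ τ fun n hn => h n (hn.trans_le ?_)
    exact List.le_sum_of_mem (List.mem_map_of_mem ht)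

end Term

theorem encodeTRS_eq (R : List (Term × Term)) : encodeTRS R = Encodable.encode R := by
  unfold encodeTRS
  induction R with
  | nil => rfl
  | cons p R ih =>
    rw [List.map_cons, Encodable.encode_list_cons, Encodable.encode_list_cons, ih]
    rfl

/-! ### Rewriting is semidecidable -/

/-- Inference rules for `t.subst σ = s`, on triples `(σ, t, s)` where the substitution `σ` is given
by the list of its first values. -/
def SubstOk (x : List Term × Term × Term) (ps : List (List Term × Term × Term)) : Prop :=
  (∃ n, x.2.1 = .var n ∧ x.2.2 = x.1.getD n (.var 0)) ∨
  ∃ f, x.2.1 = .app f (ps.map fun p => p.2.1) ∧ x.2.2 = .app f (ps.map fun p => p.2.2) ∧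
    ∀ p ∈ ps, p.1 = x.1

theorem der_substOk (σ : List Term) (t s : Term) :
    Der SubstOk (σ, t, s) ↔ t.subst (fun n => σ.getD n (.var 0)) = s := by
  constructor
  · intro h
    generalize hx : (σ, t, s) = x at h
    induction h generalizing σ t s with
    | mk x ps hok _ ih =>
      subst hx
      rcases hok with ⟨n, h1, h2⟩ | ⟨f, h1, h2, h3⟩
      · simp only at h1 h2
        rw [h1, h2, Term.subst_var]
      · simp only at h1 h2 h3
        rw [h1, h2, Term.subst_app, List.map_map]
        congr 1
        refine List.map_congr_left fun p hp => ?_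
        exact ih p hp σ p.2.1 p.2.2 (by rw [← h3 p hp])
  · rintro rfl
    induction t using Term.ind with
    | hv n => exact Der.mk _ [] (Or.inl ⟨n, rfl, by simp⟩) (by simp)
    | ha f ts ih =>
      refine Der.mk _ (ts.map fun t => (σ, t, t.subst fun n => σ.getD n (.var 0)))
        (Or.inr ⟨f, ?_, ?_, ?_⟩) ?_
      · simp [Function.comp_def]
      · simp [Function.comp_def]
      · simp
      · simpa using ih

theorem sigma_subst : SigmaPred fun x : List Term × Term × Term =>
    x.2.1.subst (fun n => x.1.getD n (.var 0)) = x.2.2 := by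
  refine (SigmaPred.der (ok := SubstOk) ?_).of_iff fun x => (der_substOk _ _ _).symm
  refine SigmaPred.or (SigmaPred.ex (SigmaPred.prim ?_)) (SigmaPred.ex (SigmaPred.prim ?_))
  · exact (PrimrecPred.eq_app (by fun_prop) (by fun_prop)).and
      (PrimrecPred.eq_app (by fun_prop) (by fun_prop))
  · refine (PrimrecPred.eq_app (by fun_prop) (by fun_prop)).and
      ((PrimrecPred.eq_app (by fun_prop) (by fun_prop)).and ?_)
    exact PrimrecPred.all_mem (p := fun (x : ((List Term × Term × Term) ×
      List (List Term × Term × Term)) × ℕ) (p : List Term × Term × Term) => p.1 = x.1.1.1)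
      (PrimrecPred.eq_app (by fun_prop) (by fun_prop)) (by fun_prop)

/-- Inference rules for the rewrite relation, on triples `(R, t, s)`. -/
def RewriteOk (x : List (Term × Term) × Term × Term)
    (ps : List (List (Term × Term) × Term × Term)) : Prop :=
  (∃ y : List Term × Term × Term, (y.2.1, y.2.2) ∈ x.1 ∧
    y.2.1.subst (fun n => y.1.getD n (.var 0)) = x.2.1 ∧
    y.2.2.subst (fun n => y.1.getD n (.var 0)) = x.2.2) ∨
  ∃ y : ℕ × List Term × List Term × Term × Term, x.2.1 = .app y.1 (y.2.1 ++ y.2.2.2.1 :: y.2.2.1) ∧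
    x.2.2 = .app y.1 (y.2.1 ++ y.2.2.2.2 :: y.2.2.1) ∧ ps = [(x.1, y.2.2.2.1, y.2.2.2.2)]

theorem der_rewriteOk (R : List (Term × Term)) (t s : Term) :
    Der RewriteOk (R, t, s) ↔ Rewrite R t s := by
  constructor
  · intro h
    generalize hx : (R, t, s) = x at h
    induction h generalizing R t s with
    | mk x ps hok _ ih =>
      subst hx
      rcases hok with ⟨⟨σ, l, r⟩, h1, h2, h3⟩ | ⟨⟨f, ts₁, ts₂, a, b⟩, h1, h2, h3⟩
      · simp only at h1 h2 h3
        rw [← h2, ← h3]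
        exact Rewrite.rule l r _ h1
      · simp only at h1 h2 h3
        rw [h1, h2]
        exact Rewrite.congr f ts₁ ts₂ a b (ih (R, a, b) (by simp [h3]) R a b rfl)
  · intro h
    induction h with
    | rule l r σ h =>
      obtain ⟨N, hN⟩ := l.subst_bound
      obtain ⟨M, hM⟩ := r.subst_bound
      have hσ : ∀ n < N + M, ((List.range (N + M)).map σ).getD n (.var 0) = σ n := by
        intro n hn
        simp [List.getD_eq_getElem?_getD, hn]
      refine Der.mk _ [] (Or.inl ⟨((List.range (N + M)).map σ, l, r), h, ?_, ?_⟩) (by simp)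
      · exact hN _ _ fun n hn => hσ n (by omega)
      · exact hM _ _ fun n hn => hσ n (by omega)
    | congr f ts₁ ts₂ t t' _ ih =>
      exact Der.mk _ [(R, t, t')] (Or.inr ⟨(f, ts₁, ts₂, t, t'), rfl, rfl, rfl⟩) (by simpa using ih)

theorem sigma_rewrite :
    SigmaPred fun x : List (Term × Term) × Term × Term => Rewrite x.1 x.2.1 x.2.2 := by
  refine (SigmaPred.der (ok := RewriteOk) ?_).of_iff fun x => (der_rewriteOk _ _ _).symm
  refine SigmaPred.or (SigmaPred.ex ?_) (SigmaPred.ex (SigmaPred.prim ?_))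
  · refine (SigmaPred.prim (PrimrecPred.mem_app (by fun_prop) (by fun_prop))).and
      (SigmaPred.and ?_ ?_)
    · exact sigma_subst.comp (f := fun x : ((List (Term × Term) × Term × Term) ×
        List (List (Term × Term) × Term × Term)) × (List Term × Term × Term) =>
        (x.2.1, x.2.2.1, x.1.1.2.1)) (by fun_prop)
    · exact sigma_subst.comp (f := fun x : ((List (Term × Term) × Term × Term) ×
        List (List (Term × Term) × Term × Term)) × (List Term × Term × Term) =>
        (x.2.1, x.2.2.2, x.1.1.2.2)) (by fun_prop)
  · exact (PrimrecPred.eq_app (by fun_prop) (by fun_prop)).and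
      ((PrimrecPred.eq_app (by fun_prop) (by fun_prop)).and
        (PrimrecPred.eq_app (by fun_prop) (by fun_prop)))

theorem sigma_reduces :
    SigmaPred fun x : List (Term × Term) × Term × Term => Reduces x.1 x.2.1 x.2.2 := by
  have hder := SigmaPred.der (α := List (Term × Term) × Term × Term)
    (ok := fun x ps => x.2.1 = x.2.2 ∨ ∃ u, Rewrite x.1 x.2.1 u ∧ ps = [(x.1, u, x.2.2)])
    ((SigmaPred.prim (PrimrecPred.eq_app (by fun_prop) (by fun_prop))).or (SigmaPred.ex
      (SigmaPred.and (sigma_rewrite.comp (f := fun x : ((List (Term × Term) × Term × Term) ×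
        List (List (Term × Term) × Term × Term)) × Term => (x.1.1.1, x.1.1.2.1, x.2))
        (by fun_prop)) (SigmaPred.prim (PrimrecPred.eq_app (by fun_prop) (by fun_prop))))))
  refine hder.of_iff fun x => ⟨fun h => ?_, fun h => ?_⟩
  · obtain ⟨R, t, s⟩ := x
    simp only at h
    unfold Reduces at h
    induction h using Relation.ReflTransGen.head_induction_on with
    | refl => exact Der.mk _ [] (Or.inl rfl) (by simp)
    | head h' _ ih => exact Der.mk _ [_] (Or.inr ⟨_, h', rfl⟩) (by simpa using ih)
  · induction h with
    | mk x ps hok _ ih =>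
      rcases hok with h | ⟨u, hu, h⟩
      · rw [h]; exact Relation.ReflTransGen.refl
      · exact Relation.ReflTransGen.head hu (ih (x.1, u, x.2.2) (by simp [h]))

/-! ### Well-formedness is semidecidable -/

/-- Inference rules for "`t` is a term over `sig`, and `V` lists its variables", on triples
`(sig, t, V)`. -/
def WFOk (x : List (ℕ × ℕ) × Term × List ℕ) (ps : List (List (ℕ × ℕ) × Term × List ℕ)) : Prop :=
  (∃ n, x.2.1 = .var n ∧ x.2.2 = [n]) ∨
  ∃ f, x.2.1 = .app f (ps.map fun p => p.2.1) ∧ (f, ps.length) ∈ x.1 ∧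
    x.2.2 = (ps.map fun p => p.2.2).flatten ∧ ∀ p ∈ ps, p.1 = x.1

theorem wf_of_der {x : List (ℕ × ℕ) × Term × List ℕ} (h : Der WFOk x) :
    WFTerm x.1 x.2.1 ∧ ∀ n, n ∈ x.2.2 ↔ IsVarOf n x.2.1 := by
  induction h with
  | mk x ps hok _ ih =>
    rcases hok with ⟨n, h1, h2⟩ | ⟨f, h1, h2, h3, h4⟩
    · rw [h1, h2]
      refine ⟨WFTerm.var n, fun m => ?_⟩
      rw [List.mem_singleton]
      exact ⟨fun h => h ▸ IsVarOf.var, fun h => by cases h; rfl⟩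
    · rw [h1, h3]
      refine ⟨WFTerm.app (by simpa using h2) ?_, fun n => ?_⟩
      · intro t ht
        obtain ⟨p, hp, rfl⟩ := List.mem_map.1 ht
        rw [← h4 p hp]
        exact (ih p hp).1
      · simp only [List.mem_flatten, List.mem_map]
        constructor
        · rintro ⟨_, ⟨p, hp, rfl⟩, hn⟩
          exact IsVarOf.app (List.mem_map.2 ⟨p, hp, rfl⟩) (((ih p hp).2 n).1 hn)
        · rintro (_ | ⟨ht, hn⟩)
          obtain ⟨p, hp, rfl⟩ := List.mem_map.1 ht
          exact ⟨_, ⟨p, hp, rfl⟩, ((ih p hp).2 n).2 hn⟩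

theorem der_of_wf {sig : List (ℕ × ℕ)} {t : Term} (h : WFTerm sig t) :
    ∃ V, Der WFOk (sig, t, V) := by
  induction h with
  | var n => exact ⟨[n], Der.mk _ [] (Or.inl ⟨n, rfl, rfl⟩) (by simp)⟩
  | @app f ts hf _ ih =>
    choose! V hV using ih
    refine ⟨(ts.map V).flatten, Der.mk _ (ts.map fun t => (sig, t, V t))
      (Or.inr ⟨f, ?_, ?_, ?_, ?_⟩) ?_⟩
    · simp [Function.comp_def]
    · simpa using hf
    · simp [Function.comp_def]
    · simp
    · simpa using hV

theorem sigma_wfOk : SigmaPred (Der WFOk) := by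
  refine SigmaPred.der ?_
  refine SigmaPred.or (SigmaPred.ex (SigmaPred.prim ?_)) (SigmaPred.ex (SigmaPred.prim ?_))
  · exact (PrimrecPred.eq_app (by fun_prop) (by fun_prop)).and
      (PrimrecPred.eq_app (by fun_prop) (by fun_prop))
  · refine (PrimrecPred.eq_app (by fun_prop) (by fun_prop)).and
      ((PrimrecPred.mem_app (by fun_prop) (by fun_prop)).and
        ((PrimrecPred.eq_app (by fun_prop) (by fun_prop)).and ?_))
    exact PrimrecPred.all_mem (p := fun (x : ((List (ℕ × ℕ) × Term × List ℕ) ×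
      List (List (ℕ × ℕ) × Term × List ℕ)) × ℕ) (p : List (ℕ × ℕ) × Term × List ℕ) =>
        p.1 = x.1.1.1) (PrimrecPred.eq_app (by fun_prop) (by fun_prop)) (by fun_prop)

theorem wfTerm_iff {sig : List (ℕ × ℕ)} {t : Term} :
    WFTerm sig t ↔ ∃ V, Der WFOk (sig, t, V) :=
  ⟨der_of_wf, fun ⟨_, h⟩ => (wf_of_der h).1⟩

theorem sigma_wfTerm : SigmaPred fun x : List (ℕ × ℕ) × Term => WFTerm x.1 x.2 :=
  (SigmaPred.ex (sigma_wfOk.comp (f := fun x : (List (ℕ × ℕ) × Term) × List ℕ =>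
    (x.1.1, x.1.2, x.2)) (by fun_prop))).of_iff fun _ => wfTerm_iff

/-- The rule condition in positive form: the left-hand side is an application, and the lists of
variables of the two sides are compared. -/
theorem wfRule_iff {sig : List (ℕ × ℕ)} {p : Term × Term} :
    (WFTerm sig p.1 ∧ WFTerm sig p.2 ∧
      (∀ n : ℕ, p.1 ≠ .var n) ∧ (∀ n : ℕ, IsVarOf n p.2 → IsVarOf n p.1)) ↔
    ∃ y : (List ℕ × List ℕ) × (ℕ × List Term), Der WFOk (sig, p.1, y.1.1) ∧
      Der WFOk (sig, p.2, y.1.2) ∧ p.1 = .app y.2.1 y.2.2 ∧ ∀ v ∈ y.1.2, v ∈ y.1.1 := by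
  constructor
  · rintro ⟨h1, h2, h3, h4⟩
    obtain ⟨V, hV⟩ := der_of_wf h1
    obtain ⟨W, hW⟩ := der_of_wf h2
    obtain ⟨f, ts, hf⟩ : ∃ f ts, p.1 = .app f ts := by
      cases h : p.1 with
      | var n => exact absurd h (h3 n)
      | app f ts => exact ⟨f, ts, rfl⟩
    exact ⟨((V, W), (f, ts)), hV, hW, hf,
      fun v hv => ((wf_of_der hV).2 v).2 (h4 v (((wf_of_der hW).2 v).1 hv))⟩
  · rintro ⟨⟨⟨V, W⟩, f, ts⟩, hV, hW, hf, h⟩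
    refine ⟨(wf_of_der hV).1, (wf_of_der hW).1, fun n hn => ?_, fun n hn => ?_⟩
    · simp [hf] at hn
    · exact ((wf_of_der hV).2 n).1 (h n (((wf_of_der hW).2 n).2 hn))

theorem sigma_wfTRS : SigmaPred fun x : List (ℕ × ℕ) × List (Term × Term) => WFTRS x.1 x.2 := by
  refine SigmaPred.and (SigmaPred.prim ?_) (SigmaPred.all (β := Term × Term)
    (p := fun (x : List (ℕ × ℕ) × List (Term × Term)) (p : Term × Term) =>
      WFTerm x.1 p.1 ∧ WFTerm x.1 p.2 ∧
      (∀ n : ℕ, p.1 ≠ .var n) ∧ (∀ n : ℕ, IsVarOf n p.2 → IsVarOf n p.1)) ?_ (by fun_prop))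
  · refine PrimrecPred.all_mem (p := fun (x : List (ℕ × ℕ) × List (Term × Term)) (p : ℕ × ℕ) =>
      ∀ q ∈ x.1, p.1 = q.1 → p.2 = q.2) ?_ (by fun_prop)
    refine PrimrecPred.all_mem (p := fun (x : (List (ℕ × ℕ) × List (Term × Term)) × (ℕ × ℕ))
      (q : ℕ × ℕ) => x.2.1 = q.1 → x.2.2 = q.2) ?_ (by fun_prop)
    exact ((PrimrecPred.eq_app (by fun_prop) (by fun_prop)).not.or
      (PrimrecPred.eq_app (by fun_prop) (by fun_prop))).of_eq fun x => imp_iff_not_or.symm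
  · simp only [wfRule_iff]
    refine SigmaPred.ex (SigmaPred.and ?_ (SigmaPred.and ?_ (SigmaPred.prim
      ((PrimrecPred.eq_app (by fun_prop) (by fun_prop)).and ?_))))
    · exact sigma_wfOk.comp (f := fun x : ((List (ℕ × ℕ) × List (Term × Term)) × (Term × Term)) ×
        ((List ℕ × List ℕ) × (ℕ × List Term)) => (x.1.1.1, x.1.2.1, x.2.1.1)) (by fun_prop)
    · exact sigma_wfOk.comp (f := fun x : ((List (ℕ × ℕ) × List (Term × Term)) × (Term × Term)) ×
        ((List ℕ × List ℕ) × (ℕ × List Term)) => (x.1.1.1, x.1.2.2, x.2.1.2)) (by fun_prop)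
    · exact PrimrecPred.all_mem (p := fun (x : ((List (ℕ × ℕ) × List (Term × Term)) ×
        (Term × Term)) × ((List ℕ × List ℕ) × (ℕ × List Term))) (v : ℕ) => v ∈ x.2.1.1)
        (PrimrecPred.mem_app (by fun_prop) (by fun_prop)) (by fun_prop)

/-! ### Confluence on a term is a `Π⁰₂` property -/

/-- A semidecidable condition together with a universally quantified implication between
semidecidable predicates is `Π⁰₂`: quantify universally over `b` and over
the witnesses of the premise. -/
theorem pi02_of_sigma {A : Set ℕ} {β : Type} [Primcodable β] {W : ℕ → Prop} {N M : ℕ × β → Prop}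
    (hW : SigmaPred W) (hN : SigmaPred N) (hM : SigmaPred M)
    (h : ∀ n, n ∈ A ↔ W n ∧ ∀ b, N (n, b) → M (n, b)) : Pi02 A := by
  obtain ⟨r, hr, hNr⟩ := hN
  -- the outer quantifier ranges over codes of pairs of some `b` and a candidate witness for `N`
  have key : SigmaPred fun x : ℕ × ℕ => W x.1 ∧
      ∀ c ∈ (Encodable.decode x.2 : Option (β × ℕ)).toList, ¬ r ((x.1, c.1), c.2) ∨ M (x.1, c.1) := by
    refine (hW.comp (by fun_prop)).and (SigmaPred.all
      (p := fun (x : ℕ × ℕ) (c : β × ℕ) => ¬ r ((x.1, c.1), c.2) ∨ M (x.1, c.1)) ?_ (by fun_prop))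
    exact (SigmaPred.prim (hr.comp (f := fun x : (ℕ × ℕ) × (β × ℕ) => ((x.1.1, x.2.1), x.2.2))
      (by fun_prop)).not).or (hM.comp (f := fun x : (ℕ × ℕ) × (β × ℕ) => (x.1.1, x.2.1))
      (by fun_prop))
  obtain ⟨q, ⟨hdec, hq⟩, hkey⟩ := key
  refine ⟨fun n x y => decide (q ((n, x), y)), ?_, fun n => ?_⟩
  · exact (Primrec.comp hq (g := fun z : ℕ × ℕ × ℕ => ((z.1, z.2.1), z.2.2)) (by fun_prop)).to_comp
  · simp only [decide_eq_true_eq, ← hkey, h]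
    constructor
    · rintro ⟨hw, hNM⟩ x
      refine ⟨hw, fun c _ => ?_⟩
      by_cases hc : r ((n, c.1), c.2)
      · exact Or.inr (hNM _ ((hNr _).2 ⟨_, hc⟩))
      · exact Or.inl hc
    · intro H
      refine ⟨(H 0).1, fun b hb => ?_⟩
      obtain ⟨y, hy⟩ := (hNr _).1 hb
      exact ((H (Encodable.encode (b, y))).2 (b, y) (by simp)).resolve_left (not_not_intro hy)

/-- An instance of the decision problem: a signature, a system and a term. Its code is the one used
in the theorem, see `encode_inst`. -/
abbrev Inst : Type := List (ℕ × ℕ) × List (Term × Term) × Term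

theorem encode_inst (x : Inst) : Encodable.encode x =
    Nat.pair (encodeSig x.1) (Nat.pair (encodeTRS x.2.1) x.2.2.encode) := by
  rw [encodeTRS_eq]
  rfl

/-- The set of codes of confluent instances. -/
def crSet : Set ℕ := { n : ℕ | ∃ (sig : List (ℕ × ℕ)) (R : List (Term × Term)) (t : Term),
      WFTRS sig R ∧ WFTerm sig t ∧ n = Nat.pair (encodeSig sig) (Nat.pair (encodeTRS R) t.encode) ∧
      CRon R t }

theorem mem_crSet (x : Inst) : Encodable.encode x ∈ crSet ↔
    WFTRS x.1 x.2.1 ∧ WFTerm x.1 x.2.2 ∧ CRon x.2.1 x.2.2 := by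
  constructor
  · rintro ⟨sig, R, t, h1, h2, h3, h4⟩
    have : x = (sig, R, t) := Encodable.encode_injective (h3.trans (encode_inst (sig, R, t)).symm)
    subst this
    exact ⟨h1, h2, h4⟩
  · rintro ⟨h1, h2, h3⟩
    exact ⟨x.1, x.2.1, x.2.2, h1, h2, encode_inst x, h3⟩

theorem pi02_crSet : Pi02 crSet := by
  refine pi02_of_sigma (β := Inst × Term × Term)
    (W := fun n => ∃ x : Inst, n = Encodable.encode x ∧ WFTRS x.1 x.2.1 ∧ WFTerm x.1 x.2.2)
    (N := fun a => a.1 = Encodable.encode a.2.1 ∧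
      Reduces a.2.1.2.1 a.2.1.2.2 a.2.2.1 ∧ Reduces a.2.1.2.1 a.2.1.2.2 a.2.2.2)
    (M := fun a => ∃ d, Reduces a.2.1.2.1 a.2.2.1 d ∧ Reduces a.2.1.2.1 a.2.2.2 d) ?_ ?_ ?_ ?_
  · refine SigmaPred.ex ((SigmaPred.prim (PrimrecPred.eq_app (by fun_prop) (by fun_prop))).and
      (SigmaPred.and ?_ ?_))
    · exact sigma_wfTRS.comp (f := fun x : ℕ × Inst => (x.2.1, x.2.2.1)) (by fun_prop)
    · exact sigma_wfTerm.comp (f := fun x : ℕ × Inst => (x.2.1, x.2.2.2)) (by fun_prop)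
  · refine (SigmaPred.prim (PrimrecPred.eq_app (by fun_prop) (by fun_prop))).and
      (SigmaPred.and ?_ ?_)
    · exact sigma_reduces.comp (f := fun x : ℕ × Inst × Term × Term =>
        (x.2.1.2.1, x.2.1.2.2, x.2.2.1)) (by fun_prop)
    · exact sigma_reduces.comp (f := fun x : ℕ × Inst × Term × Term =>
        (x.2.1.2.1, x.2.1.2.2, x.2.2.2)) (by fun_prop)
  · refine SigmaPred.ex (SigmaPred.and ?_ ?_)
    · exact sigma_reduces.comp (f := fun x : (ℕ × Inst × Term × Term) × Term =>
        (x.1.2.1.2.1, x.1.2.2.1, x.2)) (by fun_prop)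
    · exact sigma_reduces.comp (f := fun x : (ℕ × Inst × Term × Term) × Term =>
        (x.1.2.1.2.1, x.1.2.2.2, x.2)) (by fun_prop)
  · intro n
    constructor
    · rintro ⟨sig, R, t, h1, h2, rfl, h4⟩
      refine ⟨⟨(sig, R, t), (encode_inst (sig, R, t)).symm, h1, h2⟩, ?_⟩
      rintro ⟨x, t₁, t₂⟩ ⟨hx, hr⟩
      have : (sig, R, t) = x :=
        Encodable.encode_injective ((encode_inst (sig, R, t)).trans hx)
      subst this
      exact h4 t₁ t₂ hr.1 hr.2
    · rintro ⟨⟨x, rfl, h1, h2⟩, H⟩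
      exact (mem_crSet x).2 ⟨h1, h2, fun t₁ t₂ ht₁ ht₂ => H (x, t₁, t₂) ⟨rfl, ht₁, ht₂⟩⟩

/-! ### A universal rewrite system -/

namespace Univ

open Turing.ToPartrec

/-- The common normal form of all halting computations. -/
abbrev tT : Term := .app 16 []
/-- The numeral zero. -/
abbrev tO : Term := .app 0 []
/-- Successor of a numeral. -/
abbrev tS (t : Term) : Term := .app 1 [t]
/-- The empty list. -/
abbrev tNil : Term := .app 2 []
/-- The list with head `t` and tail `s`. -/
abbrev tCons (t s : Term) : Term := .app 3 [t, s]
/-- The empty continuation. -/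
abbrev tHalt : Term := .app 11 []
/-- `tN c k v`: the code `c` is to be run on the list `v`, with continuation `k`. -/
abbrev tN (c k v : Term) : Term := .app 17 [c, k, v]
/-- `tR k v`: the list `v` is to be passed to the continuation `k`. -/
abbrev tR (k v : Term) : Term := .app 18 [k, v]
/-- `tG c n x`: the generator, which counts `x` up and may at any time either run the code `c` on
the list `[n, x]` or rewrite to `tT`. -/
abbrev tG (c n x : Term) : Term := .app 19 [c, n, x]
abbrev x0 : Term := .var 0
abbrev x1 : Term := .var 1
abbrev x2 : Term := .var 2
abbrev x3 : Term := .var 3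

/-- Function symbols and arities. The symbols `0`-`3` build numbers and lists, `4`-`10` codes,
`11`-`15` continuations, `16` is the result `tT`, and `17`-`19` are the defined symbols. -/
def sig : List (ℕ × ℕ) :=
  [(0, 0), (1, 1), (2, 0), (3, 2), (4, 0), (5, 0), (6, 0), (7, 2), (8, 2), (9, 2), (10, 1),
   (11, 0), (12, 3), (13, 2), (14, 2), (15, 2), (16, 0), (17, 3), (18, 2), (19, 3)]

/-- The rules: three for the generator, then the small-step semantics of
`Turing.ToPartrec.Code`. -/
def rules : List (Term × Term) :=
  [(tG x0 x1 x2, tG x0 x1 (tS x2)),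
   (tG x0 x1 x2, tT),
   (tG x0 x1 x2, tN x0 tHalt (tCons x1 (tCons x2 tNil))),
   (tN (.app 4 []) x0 x1, tR x0 (tCons tO x1)),
   (tN (.app 5 []) x0 tNil, tR x0 (tCons (tS tO) tNil)),
   (tN (.app 5 []) x0 (tCons x1 x2), tR x0 (tCons (tS x1) tNil)),
   (tN (.app 6 []) x0 tNil, tR x0 tNil),
   (tN (.app 6 []) x0 (tCons x1 x2), tR x0 x2),
   (tN (.app 7 [x0, x1]) x2 x3, tN x0 (.app 12 [x1, x3, x2]) x3),
   (tN (.app 8 [x0, x1]) x2 x3, tN x1 (.app 14 [x0, x2]) x3),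
   (tN (.app 9 [x0, x1]) x2 tNil, tN x0 x2 tNil),
   (tN (.app 9 [x0, x1]) x2 (tCons tO x3), tN x0 x2 x3),
   (tN (.app 9 [x0, x1]) x2 (tCons (tS (.var 4)) x3), tN x1 x2 (tCons (.var 4) x3)),
   (tN (.app 10 [x0]) x1 x2, tN x0 (.app 15 [x0, x1]) x2),
   (tR tHalt x0, tT),
   (tR (.app 12 [x0, x1, x2]) x3, tN x0 (.app 13 [x3, x2]) x1),
   (tR (.app 13 [tNil, x0]) x1, tR x0 (tCons tO x1)),
   (tR (.app 13 [tCons x2 x3, x0]) x1, tR x0 (tCons x2 x1)),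
   (tR (.app 14 [x0, x1]) x2, tN x0 x1 x2),
   (tR (.app 15 [x0, x1]) tNil, tR x1 tNil),
   (tR (.app 15 [x0, x1]) (tCons tO x2), tR x1 x2),
   (tR (.app 15 [x0, x1]) (tCons (tS x3) x2), tN x0 (.app 15 [x0, x1]) x2)]

theorem wfTerm_app {sg : List (ℕ × ℕ)} {f : ℕ} {ts : List Term} :
    WFTerm sg (.app f ts) ↔ (f, ts.length) ∈ sg ∧ ∀ t ∈ ts, WFTerm sg t :=
  ⟨fun h => by cases h with | app h1 h2 => exact ⟨h1, h2⟩, fun h => .app h.1 h.2⟩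

theorem wfTerm_var {sg : List (ℕ × ℕ)} {n : ℕ} : WFTerm sg (.var n) ↔ True :=
  ⟨fun _ => trivial, fun _ => .var n⟩

theorem isVarOf_app {n f : ℕ} {ts : List Term} :
    IsVarOf n (.app f ts) ↔ ∃ t ∈ ts, IsVarOf n t :=
  ⟨fun h => by cases h with | app h1 h2 => exact ⟨_, h1, h2⟩, fun ⟨_, h1, h2⟩ => .app h1 h2⟩

theorem isVarOf_var {n m : ℕ} : IsVarOf n (.var m) ↔ n = m :=
  ⟨fun h => by cases h; rfl, fun h => h ▸ .var⟩

theorem wf_rules : WFTRS sig rules := by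
  refine ⟨by simp [WFSig, sig], ?_⟩
  simp [rules, sig, wfTerm_app, wfTerm_var, isVarOf_app, isVarOf_var]
  grind

/-! ### Configurations of the universal system -/

/-- Numbers as terms. -/
def tNat : ℕ → Term
  | 0 => tO
  | n + 1 => tS (tNat n)

/-- Lists of numbers as terms. -/
def tList : List ℕ → Term
  | [] => tNil
  | n :: l => tCons (tNat n) (tList l)

/-- Codes of `Turing.ToPartrec` as terms. -/
def tCode : Code → Term
  | .zero' => .app 4 []
  | .succ => .app 5 []
  | .tail => .app 6 []
  | .cons f g => .app 7 [tCode f, tCode g]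
  | .comp f g => .app 8 [tCode f, tCode g]
  | .case f g => .app 9 [tCode f, tCode g]
  | .fix f => .app 10 [tCode f]

/-- Continuations of `Turing.ToPartrec` as terms. -/
def tCont : Cont → Term
  | .halt => tHalt
  | .cons₁ f v k => .app 12 [tCode f, tList v, tCont k]
  | .cons₂ v k => .app 13 [tList v, tCont k]
  | .comp f k => .app 14 [tCode f, tCont k]
  | .fix f k => .app 15 [tCode f, tCont k]

/-- Configurations of the evaluator: `N c k v` runs the code `c` on `v` with continuation `k`,
`R k v` passes `v` to `k`, and `T` is the final configuration, which forgets the result. In contrast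
to `Turing.ToPartrec.Cfg`, running a code is a state of its own, so that every transition is one
rewrite step. -/
inductive Conf
  | N : Code → Cont → List ℕ → Conf
  | R : Cont → List ℕ → Conf
  | T : Conf

/-- Configurations as terms. -/
def tConf : Conf → Term
  | .N c k v => tN (tCode c) (tCont k) (tList v)
  | .R k v => tR (tCont k) (tList v)
  | .T => tT

/-- The transition function on configurations. -/
def next : Conf → Option Conf
  | .N .zero' k v => some (.R k (0 :: v))
  | .N .succ k v => some (.R k [v.headI.succ])
  | .N .tail k v => some (.R k v.tail)
  | .N (.cons f g) k v => some (.N f (.cons₁ g v k) v)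
  | .N (.comp f g) k v => some (.N g (.comp f k) v)
  | .N (.case f _) k [] => some (.N f k [])
  | .N (.case f _) k (0 :: l) => some (.N f k l)
  | .N (.case _ g) k ((y + 1) :: l) => some (.N g k (y :: l))
  | .N (.fix f) k v => some (.N f (.fix f k) v)
  | .R .halt _ => some .T
  | .R (.cons₁ f w k) v => some (.N f (.cons₂ v k) w)
  | .R (.cons₂ w k) v => some (.R k (w.headI :: v))
  | .R (.comp f k) v => some (.N f k v)
  | .R (.fix _ k) [] => some (.R k [])
  | .R (.fix _ k) (0 :: l) => some (.R k l)
  | .R (.fix f k) ((_ + 1) :: l) => some (.N f (.fix f k) l)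
  | .T => none

/-! ### Rewrite steps from configurations -/

/-- A root step with rule number `i`, the substitution being given by the list of its values. -/
theorem step_at (i : ℕ) (hi : i < rules.length) (args : List Term) {t u : Term}
    (ht : (rules[i].1).subst (fun n => args.getD n tT) = t)
    (hu : (rules[i].2).subst (fun n => args.getD n tT) = u) : Rewrite rules t u := by
  subst ht hu
  exact Rewrite.rule _ _ _ (List.getElem_mem hi)

theorem rewrite_of_next {s s' : Conf} (h : next s = some s') :
    Rewrite rules (tConf s) (tConf s') := by
  revert h
  fun_cases next s <;> intro h <;> try cases h
  case case1 k v =>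
    exact step_at 3 (by decide) [tCont k, tList v] (by simp [rules, tConf, tCode])
      (by simp [rules, tConf, tList, tNat])
  case case2 k v =>
    cases v with
    | nil =>
      exact step_at 4 (by decide) [tCont k] (by simp [rules, tConf, tCode, tList])
        (by simp [rules, tConf, tList, tNat])
    | cons n l =>
      exact step_at 5 (by decide) [tCont k, tNat n, tList l]
        (by simp [rules, tConf, tCode, tList]) (by simp [rules, tConf, tList, tNat])
  case case3 k v =>
    cases v with
    | nil =>
      exact step_at 6 (by decide) [tCont k] (by simp [rules, tConf, tCode, tList])
        (by simp [rules, tConf, tList])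
    | cons n l =>
      exact step_at 7 (by decide) [tCont k, tNat n, tList l]
        (by simp [rules, tConf, tCode, tList]) (by simp [rules, tConf])
  case case4 f g k v =>
    exact step_at 8 (by decide) [tCode f, tCode g, tCont k, tList v]
      (by simp [rules, tConf, tCode]) (by simp [rules, tConf, tCont])
  case case5 f g k v =>
    exact step_at 9 (by decide) [tCode f, tCode g, tCont k, tList v]
      (by simp [rules, tConf, tCode]) (by simp [rules, tConf, tCont])
  case case6 f g k =>
    exact step_at 10 (by decide) [tCode f, tCode g, tCont k]
      (by simp [rules, tConf, tCode, tList]) (by simp [rules, tConf, tList])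
  case case7 f g k l =>
    exact step_at 11 (by decide) [tCode f, tCode g, tCont k, tList l]
      (by simp [rules, tConf, tCode, tList, tNat]) (by simp [rules, tConf])
  case case8 f g k y l =>
    exact step_at 12 (by decide) [tCode f, tCode g, tCont k, tList l, tNat y]
      (by simp [rules, tConf, tCode, tList, tNat]) (by simp [rules, tConf, tList])
  case case9 f k v =>
    exact step_at 13 (by decide) [tCode f, tCont k, tList v]
      (by simp [rules, tConf, tCode]) (by simp [rules, tConf, tCont])
  case case10 v =>
    exact step_at 14 (by decide) [tList v] (by simp [rules, tConf, tCont]) (by simp [rules, tConf])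
  case case11 f w k v =>
    exact step_at 15 (by decide) [tCode f, tList w, tCont k, tList v]
      (by simp [rules, tConf, tCont]) (by simp [rules, tConf, tCont])
  case case12 w k v =>
    cases w with
    | nil =>
      exact step_at 16 (by decide) [tCont k, tList v]
        (by simp [rules, tConf, tCont, tList]) (by simp [rules, tConf, tList, tNat])
    | cons n l =>
      exact step_at 17 (by decide) [tCont k, tList v, tNat n, tList l]
        (by simp [rules, tConf, tCont, tList]) (by simp [rules, tConf, tList])
  case case13 f k v =>
    exact step_at 18 (by decide) [tCode f, tCont k, tList v]
      (by simp [rules, tConf, tCont]) (by simp [rules, tConf])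
  case case14 f k =>
    exact step_at 19 (by decide) [tCode f, tCont k]
      (by simp [rules, tConf, tCont, tList]) (by simp [rules, tConf, tList])
  case case15 f k l =>
    exact step_at 20 (by decide) [tCode f, tCont k, tList l]
      (by simp [rules, tConf, tCont, tList, tNat]) (by simp [rules, tConf])
  case case16 f k y l =>
    exact step_at 21 (by decide) [tCode f, tCont k, tList l, tNat y]
      (by simp [rules, tConf, tCont, tList, tNat]) (by simp [rules, tConf, tCont])

/-- Ground terms without the defined symbols `17`-`19`. -/
inductive Inert : Term → Prop
  | app (f : ℕ) (ts : List Term) : f < 17 → (∀ t ∈ ts, Inert t) → Inert (.app f ts)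

theorem lhs_root {p : Term × Term} (hp : p ∈ rules) : ∃ f ts, p.1 = .app f ts ∧ 17 ≤ f := by
  simp only [rules, List.mem_cons, List.not_mem_nil, or_false] at hp
  rcases hp with rfl | rfl | rfl | rfl | rfl | rfl | rfl | rfl | rfl | rfl | rfl | rfl | rfl |
    rfl | rfl | rfl | rfl | rfl | rfl | rfl | rfl | rfl <;> exact ⟨_, _, rfl, by decide⟩

theorem Inert.normal {t u : Term} (ht : Inert t) : ¬ Rewrite rules t u := by
  intro h
  induction h with
  | rule l r σ h =>
    obtain ⟨f, ts, hl, hf⟩ := lhs_root h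
    simp only at hl
    rw [hl, Term.subst_app] at ht
    cases ht with | app _ _ h _ => omega
  | congr f ts₁ ts₂ t t' _ ih =>
    cases ht with | app _ _ _ h => exact ih (h t (by simp))

theorem inert_tNat (n : ℕ) : Inert (tNat n) := by
  induction n with
  | zero => exact .app _ _ (by decide) (by simp)
  | succ n ih => exact .app _ _ (by decide) (by simpa using ih)

theorem inert_tList (l : List ℕ) : Inert (tList l) := by
  induction l with
  | nil => exact .app _ _ (by decide) (by simp)
  | cons n l ih => exact .app _ _ (by decide) (by simpa using ⟨inert_tNat n, ih⟩)

theorem inert_tCode (c : Code) : Inert (tCode c) := by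
  induction c <;> exact .app _ _ (by decide) (by simp [*])

theorem inert_tCont (k : Cont) : Inert (tCont k) := by
  induction k <;> exact .app _ _ (by decide) (by simp [*, inert_tList, inert_tCode])

theorem inert_tT : Inert tT := .app _ _ (by decide) (by simp)

/-- If the arguments are inert then only root steps are possible. -/
theorem root_step {f : ℕ} {ts : List Term} {u : Term} (hts : ∀ t ∈ ts, Inert t)
    (h : Rewrite rules (.app f ts) u) :
    ∃ l r σ, (l, r) ∈ rules ∧ l.subst σ = .app f ts ∧ u = r.subst σ := by
  generalize ht : Term.app f ts = t at h
  cases h with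
  | rule l r σ h => exact ⟨l, r, σ, h, rfl, rfl⟩
  | congr g ts₁ ts₂ a b h =>
    simp only [Term.app.injEq] at ht
    exact absurd h (hts a (by simp [ht.2])).normal

/-- The system is deterministic on configurations: the rule that applies is the one that performs the
transition. -/
theorem root_step_conf {l r : Term} {σ : ℕ → Term} (h : (l, r) ∈ rules) {s : Conf}
    (hs : l.subst σ = tConf s) : ∃ s', next s = some s' ∧ r.subst σ = tConf s' := by
  simp only [rules, List.mem_cons, List.not_mem_nil, or_false, Prod.mk.injEq] at h
  rcases s with ⟨c, k, v⟩ | ⟨k, v⟩ | _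
  · rcases h with h | h | h | h | h | h | h | h | h | h | h | h | h | h | h | h | h | h | h | h |
      h | h <;> obtain ⟨rfl, rfl⟩ := h <;> simp [tConf] at hs
    all_goals cases c <;> simp [tCode] at hs
    all_goals
      rcases v with _ | ⟨_ | y, l⟩ <;> simp_all [tList, tNat, next] <;>
        simp [tConf, tCont, tList, tNat]
  · rcases h with h | h | h | h | h | h | h | h | h | h | h | h | h | h | h | h | h | h | h | h |
      h | h <;> obtain ⟨rfl, rfl⟩ := h <;> simp [tConf] at hs
    all_goals cases k <;> simp [tCont] at hs
    all_goals
      rcases v with _ | ⟨_ | y, l⟩ <;> simp_all [tList, tNat, next] <;>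
        simp [tConf, tCont, tList, tNat]
    all_goals
      rename_i w k
      cases w <;> simp_all [tList, tNat]
  · obtain ⟨f, ts, hl, hf⟩ := lhs_root (p := (l, r)) (by simpa [rules] using h)
    simp only at hl
    rw [hl, Term.subst_app] at hs
    simp only [tConf, Term.app.injEq] at hs
    omega

theorem next_of_rewrite {s : Conf} {u : Term} (h : Rewrite rules (tConf s) u) :
    ∃ s', next s = some s' ∧ u = tConf s' := by
  rcases s with ⟨c, k, v⟩ | ⟨k, v⟩ | _
  · obtain ⟨l, r, σ, hlr, hl, rfl⟩ :=
      root_step (by simp [inert_tCode, inert_tCont, inert_tList]) h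
    exact root_step_conf (s := .N c k v) hlr hl
  · obtain ⟨l, r, σ, hlr, hl, rfl⟩ := root_step (by simp [inert_tCont, inert_tList]) h
    exact root_step_conf (s := .R k v) hlr hl
  · exact absurd h inert_tT.normal

/-! ### Halting configurations -/

open StateTransition in
/-- The evaluator of `Turing.ToPartrec.Code` halts when started in the given configuration. -/
def Halts : Conf → Prop
  | .N c k v => (eval step (stepNormal c k v)).Dom
  | .R k v => (eval step (.ret k v)).Dom
  | .T => True

theorem eval_step_ret (k : Cont) (v : List ℕ) :
    StateTransition.eval step (.ret k v) = StateTransition.eval step (stepRet k v) :=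
  StateTransition.reaches_eval (.single rfl)

theorem eval_step_halt (v : List ℕ) : (StateTransition.eval step (.halt v)).Dom :=
  Part.dom_iff_mem.2 ⟨.halt v, StateTransition.mem_eval.2 ⟨.refl, rfl⟩⟩

theorem halts_next {s s' : Conf} (h : next s = some s') : Halts s ↔ Halts s' := by
  revert h
  fun_cases next s <;> intro h <;> cases h <;>
    simp [Halts, stepNormal, eval_step_ret, stepRet, eval_step_halt]

theorem halts_of_reduces {s : Conf} (h : Reduces rules (tConf s) tT) : Halts s := by
  generalize ht : tConf s = t at h
  induction h using Relation.ReflTransGen.head_induction_on generalizing s with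
  | refl => cases s <;> simp [tConf] at ht; trivial
  | head h _ ih =>
    subst ht
    obtain ⟨s', h1, rfl⟩ := next_of_rewrite h
    exact (halts_next h1).2 (ih rfl)

/-- Many-step transitions of configurations. -/
abbrev Steps : Conf → Conf → Prop := Relation.ReflTransGen fun a b => next a = some b

/-- The configuration that corresponds to a state of the evaluator in Mathlib. -/
def ofCfg : Cfg → Conf
  | .ret k v => .R k v
  | .halt _ => .T

theorem steps_stepNormal (c : Code) (k : Cont) (v : List ℕ) :
    Steps (.N c k v) (ofCfg (stepNormal c k v)) := by
  induction c generalizing k v with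
  | zero' => exact .single rfl
  | succ => exact .single rfl
  | tail => exact .single rfl
  | cons f g ihf _ => exact .head rfl (ihf _ _)
  | comp f g _ ihg => exact .head rfl (ihg _ _)
  | case f g ihf ihg =>
    rcases v with _ | ⟨_ | y, l⟩
    · exact .head rfl (ihf k [])
    · exact .head rfl (ihf k l)
    · exact .head rfl (ihg k (y :: l))
  | fix f ih => exact .head rfl (ih _ _)

/-- `stepRet` and `stepNormal` unfold recursively within one step of the evaluator in Mathlib; each
unfolding is one transition here. -/
theorem steps_stepRet (k : Cont) (v : List ℕ) : Steps (.R k v) (ofCfg (stepRet k v)) := by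
  induction k generalizing v with
  | halt => exact .single rfl
  | cons₁ f w k _ => exact .head rfl (steps_stepNormal _ _ _)
  | cons₂ w k ih => exact .head rfl (ih _)
  | comp f k _ => exact .head rfl (steps_stepNormal _ _ _)
  | fix f k ih =>
    rcases v with _ | ⟨_ | y, l⟩
    · exact .head rfl (ih [])
    · exact .head rfl (ih l)
    · exact .head rfl (steps_stepNormal f (.fix f k) l)

theorem steps_of_dom {a : Cfg} (h : (StateTransition.eval step a).Dom) : Steps (ofCfg a) .T := by
  obtain ⟨b, hb'⟩ := Part.dom_iff_mem.1 h
  obtain ⟨hab, hb⟩ := StateTransition.mem_eval.1 hb'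
  clear h hb'
  induction hab using Relation.ReflTransGen.head_induction_on with
  | refl =>
    cases b with
    | halt v => exact .refl
    | ret k v => cases hb
  | @head a c hac _ ih =>
    cases a with
    | halt v => cases hac
    | ret k v =>
      cases hac
      exact (steps_stepRet k v).trans ih

theorem reduces_of_halts {s : Conf} (h : Halts s) : Reduces rules (tConf s) tT := by
  have key : Steps s .T := by
    rcases s with ⟨c, k, v⟩ | ⟨k, v⟩ | _
    · exact (steps_stepNormal c k v).trans (steps_of_dom h)
    · exact steps_of_dom (a := .ret k v) h
    · exact .refl
  exact Relation.ReflTransGen.lift tConf (fun _ _ h => rewrite_of_next h) _ _ key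

/-! ### The generator -/

/-- The start term for the code `c` and the parameter `n`, at the stage `x` of the counter. -/
abbrev gen (c : Code) (n x : ℕ) : Term := tG (tCode c) (tNat n) (tNat x)

theorem gen_succ (c : Code) (n x : ℕ) : Rewrite rules (gen c n x) (gen c n (x + 1)) :=
  step_at 0 (by decide) [tCode c, tNat n, tNat x] (by simp [rules]) (by simp [rules, tNat])

theorem gen_tT (c : Code) (n x : ℕ) : Rewrite rules (gen c n x) tT :=
  step_at 1 (by decide) [tCode c, tNat n, tNat x] (by simp [rules]) (by simp [rules])

theorem gen_run (c : Code) (n x : ℕ) :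
    Rewrite rules (gen c n x) (tConf (.N c .halt [n, x])) :=
  step_at 2 (by decide) [tCode c, tNat n, tNat x] (by simp [rules])
    (by simp [rules, tConf, tCont, tList])

theorem rewrite_gen {c : Code} {n x : ℕ} {u : Term} (h : Rewrite rules (gen c n x) u) :
    u = gen c n (x + 1) ∨ u = tT ∨ u = tConf (.N c .halt [n, x]) := by
  obtain ⟨l, r, σ, hlr, hl, rfl⟩ := root_step (by simp [inert_tCode, inert_tNat]) h
  simp only [rules, List.mem_cons, List.not_mem_nil, or_false, Prod.mk.injEq] at hlr
  rcases hlr with h | h | h | h | h | h | h | h | h | h | h | h | h | h | h | h | h | h | h | h |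
    h | h <;> obtain ⟨rfl, rfl⟩ := h <;> simp at hl
  all_goals simp [hl, tNat, tConf, tCont, tList]

theorem reduces_gen (c : Code) (n x : ℕ) : Reduces rules (gen c n 0) (gen c n x) := by
  induction x with
  | zero => exact .refl
  | succ x ih => exact ih.tail (gen_succ c n x)

/-- Every reduct of the generator is again a generator or belongs to a run on some `[n, x]`; if all
the runs halt, they all end in `tT`, to which the generator reduces as well. Conversely, `tT` and a
run are both reducts of the generator, and since `tT` is normal, a common reduct forces the run to
halt. -/
theorem cron_gen (c : Code) (n : ℕ) :
    CRon rules (gen c n 0) ↔ ∀ x, Halts (.N c .halt [n, x]) := by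
  constructor
  · intro h x
    obtain ⟨d, h1, h2⟩ := h tT _ (.single (gen_tT c n 0)) ((reduces_gen c n x).tail (gen_run c n x))
    obtain rfl : d = tT := by
      rcases Relation.ReflTransGen.cases_head h1 with rfl | ⟨u, hu, _⟩
      · rfl
      · exact absurd hu inert_tT.normal
    exact halts_of_reduces h2
  · intro h
    have inv : ∀ u, Reduces rules (gen c n 0) u →
        (∃ x, u = gen c n x) ∨ ∃ s, u = tConf s ∧ Halts s := by
      intro u hu
      induction hu with
      | refl => exact .inl ⟨0, rfl⟩
      | tail _ hu ih =>
        rcases ih with ⟨x, rfl⟩ | ⟨s, rfl, hs⟩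
        · rcases rewrite_gen hu with rfl | rfl | rfl
          · exact .inl ⟨x + 1, rfl⟩
          · exact .inr ⟨.T, rfl, trivial⟩
          · exact .inr ⟨_, rfl, h x⟩
        · obtain ⟨s', h1, rfl⟩ := next_of_rewrite hu
          exact .inr ⟨s', rfl, (halts_next h1).1 hs⟩
    have key : ∀ u, Reduces rules (gen c n 0) u → Reduces rules u tT := by
      intro u hu
      rcases inv u hu with ⟨x, rfl⟩ | ⟨s, rfl, hs⟩
      · exact .single (gen_tT c n x)
      · exact reduces_of_halts hs
    exact fun t₁ t₂ h₁ h₂ => ⟨tT, key t₁ h₁, key t₂ h₂⟩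

/-! ### The reduction -/

theorem halts_iff (c : Code) (v : List ℕ) : Halts (.N c .halt v) ↔ (c.eval v).Dom := by
  rw [Halts, stepNormal_eval]
  rfl

theorem wf_tNat (n : ℕ) : WFTerm sig (tNat n) := by
  induction n with
  | zero => simp [tNat, wfTerm_app, sig]
  | succ n ih => simp [tNat, wfTerm_app, sig] at ih ⊢; exact ih

theorem wf_tCode (c : Code) : WFTerm sig (tCode c) := by
  induction c <;> simp only [tCode, wfTerm_app] <;> simp [*] <;> simp [sig]

theorem wf_gen (c : Code) (n x : ℕ) : WFTerm sig (gen c n x) := by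
  rw [gen, wfTerm_app]
  simp only [List.mem_cons, List.not_mem_nil, or_false, forall_eq_or_imp, forall_eq, wf_tCode,
    wf_tNat, and_self, and_true]
  simp [sig]

/-- A `∀∃` predicate is decided by a single code: an unbounded search for the existential
witness. -/
theorem exists_search (p : ℕ → ℕ → ℕ → Bool)
    (hp : Computable fun x : ℕ × ℕ × ℕ => p x.1 x.2.1 x.2.2) :
    ∃ c : Code, ∀ n x, (c.eval [n, x]).Dom ↔ ∃ y, p n x y = true := by
  have h1 : Partrec fun a : List.Vector ℕ 2 =>
      Nat.rfind fun y => Part.some (p (a.get 0) (a.get 1) y) := by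
    refine Partrec.rfind (p := fun (a : List.Vector ℕ 2) y => Part.some (p (a.get 0) (a.get 1) y))
      (Computable.partrec (Computable.comp
      (f := fun x : ℕ × ℕ × ℕ => p x.1 x.2.1 x.2.2)
      (g := fun x : List.Vector ℕ 2 × ℕ => (x.1.get 0, x.1.get 1, x.2)) hp ?_))
    have h (i : Fin 2) : Computable fun x : List.Vector ℕ 2 × ℕ => x.1.get i :=
      (Primrec.vector_get.comp Primrec.fst (.const i)).to_comp
    exact (h 0).pair ((h 1).pair .snd)
  obtain ⟨c, hc⟩ := Code.exists_code (Nat.Partrec'.part_iff.2 h1)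
  refine ⟨c, fun n x => ?_⟩
  have h2 : c.eval [n, x] = pure <$> Nat.rfind fun y => Part.some (p n x y) := hc ⟨[n, x], rfl⟩
  rw [h2]
  change (Nat.rfind _).Dom ↔ _
  refine Nat.rfind_dom.trans ?_
  constructor
  · rintro ⟨y, hy, _⟩
    exact ⟨y, by simpa using hy⟩
  · rintro ⟨y, hy⟩
    exact ⟨y, by simpa using hy, fun _ => trivial⟩

theorem primrec_tNat : Primrec tNat := by
  have h : Primrec fun n : ℕ => Nat.rec (motive := fun _ => Term) tO (fun _ t => tS t) n := by
    exact Primrec.nat_rec₁ tO (f := fun _ t => tS t)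
      (by unfold Primrec₂; fun_prop)
  refine h.of_eq fun n => ?_
  induction n with
  | zero => rfl
  | succ n ih => simp only [tNat, ← ih]

/-- Only the start term depends on `n`, so computability of the reduction is that of `tNat`. -/
theorem manyOneRed_crSet (B : Set ℕ) (hB : Pi02 B) : ManyOneRed B crSet := by
  obtain ⟨p, hp, hB⟩ := hB
  obtain ⟨c, hc⟩ := exists_search p hp
  refine ⟨fun n => Encodable.encode ((sig, rules, gen c n 0) : Inst), ?_, fun n => ?_⟩
  · have h : Primrec fun n => ((sig, rules, gen c n 0) : Inst) := by
      have := primrec_tNat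
      fun_prop
    exact (Primrec.encode.comp h).to_comp
  · rw [hB, mem_crSet]
    simp only [wf_rules, wf_gen, cron_gen, halts_iff, hc, true_and]

end Univ

/-- Confluence of a finite TRS on a single term is Π⁰₂-complete. -/
theorem cr_single_term_Pi02Complete :
    Pi02Complete { n : ℕ | ∃ (sig : List (ℕ × ℕ)) (R : List (Term × Term)) (t : Term),
      WFTRS sig R ∧ WFTerm sig t ∧ n = Nat.pair (encodeSig sig) (Nat.pair (encodeTRS R) t.encode) ∧
      CRon R t } :=
  ⟨pi02_crSet, Univ.manyOneRed_crSet⟩
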